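/- If for two moving labels lᵢ and lⱼ of a transition instance there is no edge between vᵢ and vⱼ in the movement graph G_M in either direction, then lᵢ and lⱼ do not overlap each other at any moment, regardless of the timing of their movements (in particular, whether they are executed consecutively in either order or simultaneously). -/

import Mathlib

open Set

/-- The closed axis-aligned unit square with lower-left corner `a`. -/
def unitSq (a : ℝ × ℝ) : Set (ℝ × ℝ) :=
  Set.Icc a.1 (a.1 + 1) ×ˢ Set.Icc a.2 (a.2 + 1)

/-- Two unit squares, given by their lower-left corners, overlap if their interiors intersect. -/
def Overlap (a b : ℝ × ℝ) : Prop :=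
  (interior (unitSq a) ∩ interior (unitSq b)).Nonempty

/-- `a` is the lower-left corner of one of the four candidate positions of point `p`
(the four closed unit squares having `p` as a corner). -/
def IsCandidate (p a : ℝ × ℝ) : Prop :=
  a = p ∨ a = (p.1 - 1, p.2) ∨ a = (p.1, p.2 - 1) ∨ a = (p.1 - 1, p.2 - 1)

/-- Two unit squares (given by lower-left corners) share an edge. -/
def SharesEdge (a b : ℝ × ℝ) : Prop :=
  (a.1 = b.1 ∧ (a.2 - b.2 = 1 ∨ b.2 - a.2 = 1)) ∨
  (a.2 = b.2 ∧ (a.1 - b.1 = 1 ∨ b.1 - a.1 = 1))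

/-- A movement of the unit-square label of point `p` from candidate position `S` to candidate
position `E`.  If `S` and `E` share an edge (a non-diagonal movement) we set `I = E` and the
label translates directly from `S` to `E`; if `S` and `E` are diagonally opposite (a diagonal
movement) the label translates through the specified intermediate candidate position `I`,
which shares an edge with both `S` and `E`. -/
structure Movement where
  p : ℝ × ℝ
  S : ℝ × ℝ
  I : ℝ × ℝ
  E : ℝ × ℝ
  candS : IsCandidate p S
  candI : IsCandidate p I
  candE : IsCandidate p E
  legs : (I = E ∧ SharesEdge S E) ∨
    (SharesEdge S I ∧ SharesEdge I E ∧ S.1 ≠ E.1 ∧ S.2 ≠ E.2)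

/-- A movement is diagonal if the start and end positions are diagonally opposite
(equivalently, the intermediate position differs from the end position). -/
def Movement.Diagonal (m : Movement) : Prop := m.I ≠ m.E

/-- Position (lower-left corner) of a moving label at time `t` after the start of its movement:
unit-speed axis-aligned translation, one unit of time per axis-aligned leg; the label rests at
its start position before the movement begins and at its end position after it is finished. -/
noncomputable def Movement.pos (m : Movement) (t : ℝ) : ℝ × ℝ :=
  if t ≤ 0 then m.S
  else if t ≤ 1 then m.S + t • (m.I - m.S)
  else if t ≤ 2 then m.I + (t - 1) • (m.E - m.I)
  else m.E

/-- Duration of a movement: one unit of time per axis-aligned translation. -/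
noncomputable def Movement.dur (m : Movement) : ℝ := if m.I = m.E then 1 else 2

/-- A transition instance: finitely many stationary labels (given by their lower-left corners)
and `n` moving labels, each with a prescribed movement, such that the labeling `L₁` formed by
the stationary labels together with the start positions of the moving labels is overlap-free,
and the labeling `L₂` formed by the stationary labels together with the end positions of the
moving labels is overlap-free. -/
structure TransitionInstance (k n : ℕ) where
  stat : Fin k → ℝ × ℝ
  mov : Fin n → Movement
  free_start : ∀ a b : Fin k ⊕ Fin n, a ≠ b →
    ¬ Overlap (Sum.elim stat (fun j => (mov j).S) a)
      (Sum.elim stat (fun j => (mov j).S) b)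
  free_end : ∀ a b : Fin k ⊕ Fin n, a ≠ b →
    ¬ Overlap (Sum.elim stat (fun j => (mov j).E) a)
      (Sum.elim stat (fun j => (mov j).E) b)

/-- A schedule `τ` of starting times is consecutive if the execution intervals of the movements
are pairwise non-overlapping, i.e. the movements are executed one after another in some order. -/
def Consecutive {k n : ℕ} (T : TransitionInstance k n) (τ : Fin n → ℝ) : Prop :=
  ∀ i j : Fin n, i ≠ j →
    τ i + (T.mov i).dur ≤ τ j ∨ τ j + (T.mov j).dur ≤ τ i

/-- Position (lower-left corner) of each label at global time `t`, when moving label `j`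
starts its movement at time `τ j`; stationary labels never move. -/
noncomputable def traj {k n : ℕ} (T : TransitionInstance k n) (τ : Fin n → ℝ) (t : ℝ) :
    Fin k ⊕ Fin n → ℝ × ℝ :=
  Sum.elim T.stat (fun j => (T.mov j).pos (t - τ j))

/-- The number of overlaps during the transition: the number of unordered pairs of distinct
labels whose interiors intersect at some moment. -/
noncomputable def overlapCount {k n : ℕ} (T : TransitionInstance k n) (τ : Fin n → ℝ) : ℕ :=
  Set.ncard {q : Sym2 (Fin k ⊕ Fin n) | ∃ a b : Fin k ⊕ Fin n,
    q = s(a, b) ∧ a ≠ b ∧ ∃ t : ℝ, Overlap (traj T τ t a) (traj T τ t b)}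

/-- The movement graph `G_M`: there is an edge from `vᵢ` to `vⱼ` whenever the intermediate
(if any) or end position of `Mⱼ` overlaps the start position of `Mᵢ`, or the end position of
`Mⱼ` overlaps the intermediate position (if any) of `Mᵢ`; in addition, if the intermediate
positions of `Mᵢ` and `Mⱼ` overlap and `i < j`, there is an edge from `vᵢ` to `vⱼ`. -/
def Edge {k n : ℕ} (T : TransitionInstance k n) (i j : Fin n) : Prop :=
  ((T.mov j).Diagonal ∧ Overlap (T.mov j).I (T.mov i).S) ∨
  Overlap (T.mov j).E (T.mov i).S ∨
  ((T.mov i).Diagonal ∧ Overlap (T.mov j).E (T.mov i).I) ∨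
  ((T.mov i).Diagonal ∧ (T.mov j).Diagonal ∧ Overlap (T.mov i).I (T.mov j).I ∧ i < j)

/-!
Two labels overlap exactly when their corners differ by less than `1` in both coordinates, so the
corners at which a label overlaps a fixed label `c` form an open square of side `2`. Each leg of a
movement is an axis-parallel segment of length at most `1`; it is too short to cross this square
and must have an endpoint in it as soon as it meets it. Hence if two moving labels overlap at some
pair of times, one replaces first one and then the other by a start, intermediate or end position
and finds two overlapping such positions. Each of these pairs is excluded by the overlap-freeness
of `L₁` or `L₂`, or by the absence of an edge.
-/

theorem Ioo_add_inter_Ioo_add_nonempty_iff {α : Type*} [AddCommGroup α] [LinearOrder α]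
    [IsOrderedAddMonoid α] [DenselyOrdered α] {a b r : α} :
    (Ioo a (a + r) ∩ Ioo b (b + r)).Nonempty ↔ |a - b| < r := by
  rw [Ioo_inter_Ioo, nonempty_Ioo, sup_lt_iff, lt_inf_iff, lt_inf_iff, abs_lt]
  grind

theorem abs_sub_lt_or_abs_sub_lt_of_mem_uIcc {α : Type*} [AddCommGroup α] [LinearOrder α]
    [IsOrderedAddMonoid α] {a b c r x : α} (hab : |a - b| < 2 • r) (hx : x ∈ uIcc a b)
    (hxc : |x - c| < r) : |a - c| < r ∨ |b - c| < r := by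
  wlog hle : a ≤ b generalizing a b
  · exact (this (abs_sub_comm a b ▸ hab) (uIcc_comm a b ▸ hx) (le_of_not_ge hle)).symm
  obtain ⟨hax, hxb⟩ := uIcc_of_le hle ▸ hx
  simp only [abs_lt] at hab hxc ⊢
  by_contra! hfar
  have ha : a ≤ c - r := by grind
  have hb : c + r ≤ b := by grind
  grind

theorem overlap_iff_abs_sub_lt {a b : ℝ × ℝ} :
    Overlap a b ↔ |a.1 - b.1| < 1 ∧ |a.2 - b.2| < 1 := by
  simp only [Overlap, unitSq, interior_prod_eq, interior_Icc, prod_inter_prod, prod_nonempty_iff,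
    Ioo_add_inter_Ioo_add_nonempty_iff]

theorem Overlap.symm {a b : ℝ × ℝ} (h : Overlap a b) : Overlap b a := by
  rwa [Overlap, inter_comm]

/-- The segment from `a` to `b` is parallel to an axis and shorter than twice the side of a label.
The degenerate case `a = b` is allowed, so that the second leg of a non-diagonal movement is also
covered. -/
def IsShortLeg (a b : ℝ × ℝ) : Prop :=
  (a.1 = b.1 ∧ |a.2 - b.2| < 2) ∨ (a.2 = b.2 ∧ |a.1 - b.1| < 2)

theorem IsShortLeg.refl (a : ℝ × ℝ) : IsShortLeg a a :=
  .inl ⟨rfl, by simp⟩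

theorem SharesEdge.isShortLeg {a b : ℝ × ℝ} (h : SharesEdge a b) : IsShortLeg a b := by
  have abs_sub_lt_two {u v : ℝ} (huv : u - v = 1 ∨ v - u = 1) : |u - v| < 2 := by grind
  exact h.imp (And.imp_right abs_sub_lt_two) (And.imp_right abs_sub_lt_two)

theorem IsShortLeg.overlap_left_or_right {a b c x : ℝ × ℝ} (hab : IsShortLeg a b)
    (hx : x ∈ segment ℝ a b) (hxc : Overlap x c) : Overlap a c ∨ Overlap b c := by
  obtain ⟨hx₁, hx₂⟩ := Prod.segment_subset a b hx
  rw [segment_eq_uIcc] at hx₁ hx₂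
  simp only [overlap_iff_abs_sub_lt] at hxc ⊢
  obtain ⟨hxc₁, hxc₂⟩ := hxc
  rcases hab with ⟨heq, hlt⟩ | ⟨heq, hlt⟩
  · have hxa : x.1 = a.1 := by simpa only [← heq, uIcc_self, mem_singleton_iff] using hx₁
    rw [← heq, ← hxa]
    exact (abs_sub_lt_or_abs_sub_lt_of_mem_uIcc (by simpa using hlt) hx₂ hxc₂).imp
      (.intro hxc₁) (.intro hxc₁)
  · have hxa : x.2 = a.2 := by simpa only [← heq, uIcc_self, mem_singleton_iff] using hx₂
    rw [← heq, ← hxa]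
    exact (abs_sub_lt_or_abs_sub_lt_of_mem_uIcc (by simpa using hlt) hx₁ hxc₁).imp
      (.intro · hxc₂) (.intro · hxc₂)

namespace Movement

/-- The start, intermediate and end positions of a movement. For a non-diagonal movement the
intermediate position is by convention the end position, so `m.I` adds nothing. -/
def stops (m : Movement) : Set (ℝ × ℝ) := {m.S, m.I, m.E}

theorem mem_stops_iff {m : Movement} {a : ℝ × ℝ} :
    a ∈ m.stops ↔ a = m.S ∨ (m.Diagonal ∧ a = m.I) ∨ a = m.E := by
  simp only [stops, Diagonal, mem_insert_iff, mem_singleton_iff]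
  grind

theorem isShortLeg_S_I (m : Movement) : IsShortLeg m.S m.I := by
  rcases m.legs with ⟨hIE, hSE⟩ | ⟨hSI, -⟩
  · exact hIE ▸ hSE.isShortLeg
  · exact hSI.isShortLeg

theorem isShortLeg_I_E (m : Movement) : IsShortLeg m.I m.E := by
  rcases m.legs with ⟨hIE, -⟩ | ⟨-, hIE, -⟩
  · exact hIE ▸ .refl m.I
  · exact hIE.isShortLeg

theorem pos_mem_segment_or_pos_mem_segment (m : Movement) (t : ℝ) :
    m.pos t ∈ segment ℝ m.S m.I ∨ m.pos t ∈ segment ℝ m.I m.E := by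
  simp only [segment_eq_image']
  unfold pos
  split_ifs with h₀ h₁ h₂
  · exact .inl ⟨0, by simp⟩
  · exact .inl ⟨t, ⟨(not_le.mp h₀).le, h₁⟩, rfl⟩
  · exact .inr ⟨t - 1, ⟨by linarith, by linarith⟩, rfl⟩
  · exact .inr ⟨1, by simp⟩

theorem exists_mem_stops_overlap {m : Movement} {t : ℝ} {c : ℝ × ℝ} (h : Overlap (m.pos t) c) :
    ∃ a ∈ m.stops, Overlap a c := by
  simp only [stops, mem_insert_iff, mem_singleton_iff, exists_eq_or_imp, exists_eq_left]
  rcases m.pos_mem_segment_or_pos_mem_segment t with hSI | hIE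
  · exact (m.isShortLeg_S_I.overlap_left_or_right hSI h).imp_right .inl
  · exact .inr (m.isShortLeg_I_E.overlap_left_or_right hIE h)

theorem exists_mem_stops_overlap_of_overlap_pos {m m' : Movement} {t t' : ℝ}
    (h : Overlap (m.pos t) (m'.pos t')) : ∃ a ∈ m.stops, ∃ b ∈ m'.stops, Overlap a b := by
  obtain ⟨a, ha, hab⟩ := exists_mem_stops_overlap h
  obtain ⟨b, hb, hba⟩ := exists_mem_stops_overlap hab.symm
  exact ⟨a, ha, b, hb, hba.symm⟩

end Movement

theorem TransitionInstance.not_overlap_of_mem_stops {k n : ℕ} (T : TransitionInstance k n)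
    {i j : Fin n} (hij : i ≠ j) (h₁ : ¬ Edge T i j) (h₂ : ¬ Edge T j i) {a b : ℝ × ℝ}
    (ha : a ∈ (T.mov i).stops) (hb : b ∈ (T.mov j).stops) : ¬ Overlap a b := by
  intro hab
  rcases Movement.mem_stops_iff.mp ha with rfl | ⟨hi, rfl⟩ | rfl <;>
    rcases Movement.mem_stops_iff.mp hb with rfl | ⟨hj, rfl⟩ | rfl
  · exact T.free_start (.inr i) (.inr j) (Sum.inr_injective.ne hij) hab
  · exact h₁ (.inl ⟨hj, hab.symm⟩)
  · exact h₁ (.inr (.inl hab.symm))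
  · exact h₂ (.inl ⟨hi, hab⟩)
  · rcases hij.lt_or_gt with hlt | hgt
    · exact h₁ (.inr (.inr (.inr ⟨hi, hj, hab, hlt⟩)))
    · exact h₂ (.inr (.inr (.inr ⟨hj, hi, hab.symm, hgt⟩)))
  · exact h₁ (.inr (.inr (.inl ⟨hi, hab.symm⟩)))
  · exact h₂ (.inr (.inl hab))
  · exact h₂ (.inr (.inr (.inl ⟨hj, hab⟩)))
  · exact T.free_end (.inr i) (.inr j) (Sum.inr_injective.ne hij) hab

/-- If two moving labels of a transition instance are not connected by an edge of the movement
graph in either direction, then they never overlap each other, regardless of the timing of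
their movements (in particular, whether they are executed consecutively in either order or
simultaneously). -/
theorem no_overlap_of_unrelated {k n : ℕ} (T : TransitionInstance k n) (i j : Fin n)
    (hij : i ≠ j) (h₁ : ¬ Edge T i j) (h₂ : ¬ Edge T j i) :
    ∀ τi τj t : ℝ, ¬ Overlap ((T.mov i).pos (t - τi)) ((T.mov j).pos (t - τj)) := by
  intro τi τj t hoverlap
  obtain ⟨a, ha, b, hb, hab⟩ := Movement.exists_mem_stops_overlap_of_overlap_pos hoverlap
  exact T.not_overlap_of_mem_stops hij h₁ h₂ ha hb hab
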